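/- arXiv:1007.5264 — 9 statements merged into one kernel-verified Lean document; each statement's English description precedes it below -/
import Mathlib

section
/- Let d, m, n be positive integers with m > n, gcd(m,n) = 1, and m + n odd, and set a = d*(m^2 - n^2), b = d*(2*m*n), c = d*(m^2 + n^2). Let h1 be a real number with 0 < h1 < c, and set x = b*h1/c and y = a - a*h1/c. If x, a - y, and h1 are all positive integers, then there exists an integer δ with 1 ≤ δ ≤ d - 1 such that h1 = δ*(m^2+n^2), x = δ*(2*m*n), a - y = δ*(m^2-n^2), and moreover y = (d-δ)*(m^2-n^2), b - x = (d-δ)*(2*m*n), and c - h1 = (d-δ)*(m^2+n^2). -/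
theorem theorem1_quantitative (d m n : ℕ) (hd : 0 < d) (hm : 0 < m) (hn : 0 < n)
    (hmn : n < m) (hcop : Nat.gcd m n = 1) (hpar : (m + n) % 2 = 1)
    (a b c : ℕ) (ha : a = d * (m ^ 2 - n ^ 2)) (hb : b = d * (2 * m * n))
    (hc : c = d * (m ^ 2 + n ^ 2))
    (h1 : ℝ) (hh1pos : 0 < h1) (hh1lt : h1 < c)
    (x y : ℝ) (hx : x = b * h1 / c) (hy : y = a - a * h1 / c)
    (hxint : ∃ X : ℤ, x = X) (hayint : ∃ Y : ℤ, (a : ℝ) - y = Y)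
    (hh1int : ∃ H : ℤ, h1 = H) :
    ∃ δ : ℕ, 1 ≤ δ ∧ δ ≤ d - 1 ∧
      h1 = δ * ((m : ℝ) ^ 2 + n ^ 2) ∧
      x = δ * (2 * m * n) ∧
      (a : ℝ) - y = δ * ((m : ℝ) ^ 2 - n ^ 2) ∧
      y = ((d : ℝ) - δ) * ((m : ℝ) ^ 2 - n ^ 2) ∧
      (b : ℝ) - x = ((d : ℝ) - δ) * (2 * m * n) ∧
      (c : ℝ) - h1 = ((d : ℝ) - δ) * ((m : ℝ) ^ 2 + n ^ 2) := by
  obtain ⟨X, hX⟩ := hxint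
  obtain ⟨H, hH⟩ := hh1int
  have hle : n ^ 2 ≤ m ^ 2 := Nat.pow_le_pow_left hmn.le 2
  have hdR : (0 : ℝ) < d := by exact_mod_cast hd
  have hmR : (0 : ℝ) < m := by exact_mod_cast hm
  have hnR : (0 : ℝ) < n := by exact_mod_cast hn
  have hs : (0 : ℝ) < (m : ℝ) ^ 2 + n ^ 2 := by positivity
  have haR : (a : ℝ) = d * ((m : ℝ) ^ 2 - n ^ 2) := by
    rw [ha]; push_cast [Nat.cast_sub hle]; ring
  have hbR : (b : ℝ) = d * (2 * m * n) := by rw [hb]; push_cast; ring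
  have hcR : (c : ℝ) = d * ((m : ℝ) ^ 2 + n ^ 2) := by rw [hc]; push_cast; ring
  have hmnc : IsCoprime (m : ℤ) (n : ℤ) := Nat.isCoprime_iff_coprime.mpr hcop
  have c2 : IsCoprime ((m : ℤ) ^ 2 + (n : ℤ) ^ 2) 2 := by
    have hodd : Odd ((m : ℤ) ^ 2 + (n : ℤ) ^ 2) := by
      have h : Odd (m + n) := Nat.odd_iff.mpr hpar
      have h' : Odd (m ^ 2 + n ^ 2) := by
        rw [Nat.odd_add] at h ⊢
        simpa [Nat.odd_pow_iff, Nat.even_pow] using h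
      exact_mod_cast h'
    obtain ⟨k, hk⟩ := hodd
    exact ⟨1, -k, by rw [hk]; ring⟩
  have cm : IsCoprime ((m : ℤ) ^ 2 + (n : ℤ) ^ 2) (m : ℤ) := by
    have h : IsCoprime ((n : ℤ) ^ 2 + m * m) (m : ℤ) :=
      IsCoprime.add_mul_left_left (IsCoprime.pow_left hmnc.symm) _
    convert h using 1; ring
  have cn : IsCoprime ((m : ℤ) ^ 2 + (n : ℤ) ^ 2) (n : ℤ) := by
    have h : IsCoprime ((m : ℤ) ^ 2 + n * n) (n : ℤ) :=
      IsCoprime.add_mul_left_left (IsCoprime.pow_left hmnc) _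
    convert h using 1; ring
  have cc := (c2.mul_right cm).mul_right cn
  have key : (X : ℝ) * ((m : ℝ) ^ 2 + n ^ 2) = 2 * m * n * H := by
    rw [← hX, ← hH, hx, hbR, hcR]; field_simp
  have keyZ : X * ((m : ℤ) ^ 2 + (n : ℤ) ^ 2) = 2 * m * n * H := by exact_mod_cast key
  obtain ⟨k, hk⟩ := cc.dvd_of_dvd_mul_left (Dvd.intro_left X keyZ)
  have hkR : h1 = k * ((m : ℝ) ^ 2 + n ^ 2) := by rw [hH, hk]; push_cast; ring
  have hk0 : (0 : ℝ) < k := by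
    rw [hkR] at hh1pos; exact pos_of_mul_pos_left hh1pos hs.le
  have hkd : (k : ℝ) < d := by
    rw [hkR, hcR] at hh1lt; exact lt_of_mul_lt_mul_right hh1lt hs.le
  have hk0' : 0 < k := by exact_mod_cast hk0
  lift k to ℕ using hk0'.le
  have hkd' : k < d := by exact_mod_cast hkd
  rw [Int.cast_natCast] at hkR
  have hxk : x = k * (2 * m * n) := by rw [hx, hbR, hcR, hkR]; field_simp
  have hyk : y = ((d : ℝ) - k) * ((m : ℝ) ^ 2 - n ^ 2) := by
    rw [hy, haR, hcR, hkR]; field_simp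
  refine ⟨k, by omega, by omega, hkR, hxk, ?_, hyk, ?_, ?_⟩
  · rw [hyk, haR]; ring
  · rw [hxk, hbR]; ring
  · rw [hkR, hcR]; ring
end

section
/- Let m, n be positive integers with m > n, gcd(m,n) = 1, and m + n odd. Then there is no real number t with 0 < t < 1 such that t*(m^2 - n^2), t*(2*m*n), and t*(m^2 + n^2) are all integers. Consequently, for a primitive Pythagorean triangle (the case d = 1), no position of the point P on the hypotenuse makes either of the triangles PDB, PEA Pythagorean. -/
theorem theorem2_i_primitive (m n : ℕ) (hm : 0 < m) (hn : 0 < n)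
    (hmn : n < m) (hcop : Nat.gcd m n = 1) (hpar : (m + n) % 2 = 1) :
    ¬ ∃ t : ℝ, 0 < t ∧ t < 1 ∧
      (∃ k : ℤ, t * ((m : ℝ) ^ 2 - n ^ 2) = k) ∧
      (∃ k : ℤ, t * (2 * m * n) = k) ∧
      (∃ k : ℤ, t * ((m : ℝ) ^ 2 + n ^ 2) = k) := by
  rintro ⟨t, h0, h1, ⟨k, hk⟩, -, ⟨l, hl⟩⟩
  have hc : IsCoprime (m : ℤ) (n : ℤ) := Nat.isCoprime_iff_coprime.mpr hcop
  have hN : IsCoprime ((m : ℤ) ^ 2 - n ^ 2) ((n : ℤ) ^ 2) := by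
    obtain ⟨u, v, h⟩ := (hc.pow : IsCoprime ((m : ℤ) ^ 2) ((n : ℤ) ^ 2))
    exact ⟨u, u + v, by linarith⟩
  have h2 : IsCoprime ((m : ℤ) ^ 2 - n ^ 2) 2 := by
    have e : ((m : ℤ) + n) = 2 * (((m + n) / 2 : ℕ) : ℤ) + 1 := by omega
    generalize (((m + n) / 2 : ℕ) : ℤ) = q at e
    have e' : (m : ℤ) = 2 * q + 1 - n := by linarith
    refine ⟨1, -(2 * q ^ 2 + 2 * q - 2 * q * n - n), ?_⟩
    rw [e']; ring
  obtain ⟨u, v, h⟩ := h2.mul_right hN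
  have hR : (u : ℝ) * ((m : ℝ) ^ 2 - n ^ 2) + v * (2 * n ^ 2) = 1 := by exact_mod_cast h
  have ht : t = ((u * k + v * (l - k) : ℤ) : ℝ) := by
    push_cast
    rw [← hk, ← hl]
    linear_combination (-t) * hR
  rw [ht] at h0 h1
  have a : 0 < u * k + v * (l - k) := by exact_mod_cast h0
  have b : u * k + v * (l - k) < 1 := by exact_mod_cast h1
  omega
end

section
/- Let m, n be positive integers with m > n, gcd(m,n) = 1, and m + n odd, and let d = 2, so a = 2*(m^2-n^2), b = 2*(2*m*n), c = 2*(m^2+n^2). For a real number t with 0 < t < 1, the three numbers t*a, t*b, t*c are all integers if and only if t = 1/2. Consequently, the triangles PDB and PEA are both Pythagorean exactly when P is the midpoint of the hypotenuse, and for any other position of P neither triangle is Pythagorean. -/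
theorem theorem2_ii_d_eq_two (m n : ℕ) (hm : 0 < m) (hn : 0 < n)
    (hmn : n < m) (hcop : Nat.gcd m n = 1) (hpar : (m + n) % 2 = 1)
    (t : ℝ) (ht0 : 0 < t) (ht1 : t < 1) :
    ((∃ k : ℤ, t * (2 * ((m : ℝ) ^ 2 - n ^ 2)) = k) ∧
     (∃ k : ℤ, t * (2 * (2 * m * n)) = k) ∧
     (∃ k : ℤ, t * (2 * ((m : ℝ) ^ 2 + n ^ 2)) = k)) ↔ t = 1 / 2 := by
  constructor
  · rintro ⟨⟨p, hp⟩, -, ⟨q, hq⟩⟩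
    have h0 : IsCoprime (m : ℤ) (n : ℤ) := Nat.isCoprime_iff_coprime.mpr hcop
    have h1 : IsCoprime ((m : ℤ) ^ 2 - n ^ 2) ((n : ℤ) ^ 2) := by
      obtain ⟨u, v, huv⟩ := h0.pow (m := 2) (n := 2)
      exact ⟨u, u + v, by linear_combination huv⟩
    have h2 : IsCoprime ((m : ℤ) ^ 2 - n ^ 2) 2 := by
      obtain ⟨j, hj⟩ : ∃ j : ℤ, (m : ℤ) = 2 * j + 1 - n := ⟨((m : ℤ) + n) / 2, by omega⟩
      refine ⟨1, -(2 * j ^ 2 + 2 * j - n * (2 * j + 1)), ?_⟩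
      rw [hj]; ring
    obtain ⟨u, v, huv⟩ := h2.mul_right h1
    have huv' : (u : ℝ) * ((m : ℝ) ^ 2 - n ^ 2) + v * (2 * (n : ℝ) ^ 2) = 1 := by
      exact_mod_cast huv
    have key : 2 * t = ((u * p + v * (q - p) : ℤ) : ℝ) := by
      push_cast
      rw [← hp, ← hq]
      linear_combination (-2 * t) * huv'
    have a1 : (0 : ℤ) < u * p + v * (q - p) := by
      have : (0 : ℝ) < ((u * p + v * (q - p) : ℤ) : ℝ) := by linarith
      exact_mod_cast this
    have a2 : u * p + v * (q - p) < 2 := by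
      have : ((u * p + v * (q - p) : ℤ) : ℝ) < 2 := by linarith
      exact_mod_cast this
    have a3 : u * p + v * (q - p) = 1 := by linarith [Int.add_one_le_iff.mpr a1, Int.lt_add_one_iff.mp (show u * p + v * (q - p) < 1 + 1 from a2)]
    rw [a3] at key
    push_cast at key
    linarith
  · rintro rfl
    refine ⟨⟨(m : ℤ) ^ 2 - n ^ 2, ?_⟩, ⟨2 * m * n, ?_⟩, ⟨(m : ℤ) ^ 2 + n ^ 2, ?_⟩⟩ <;>
      push_cast <;> ring
end

section
/- Let m, n be positive integers with m > n, gcd(m,n) = 1, and m + n odd, and let d = 3, so a = 3*(m^2-n^2), b = 3*(2*m*n), c = 3*(m^2+n^2). For a real number t with 0 < t < 1, the three numbers t*a, t*b, t*c are all integers if and only if t = 1/3 or t = 2/3. -/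
theorem theorem2_iii_d_eq_three (m n : ℕ) (hm : 0 < m) (hn : 0 < n)
    (hmn : n < m) (hcop : Nat.gcd m n = 1) (hpar : (m + n) % 2 = 1)
    (t : ℝ) (ht0 : 0 < t) (ht1 : t < 1) :
    ((∃ k : ℤ, t * (3 * ((m : ℝ) ^ 2 - n ^ 2)) = k) ∧
     (∃ k : ℤ, t * (3 * (2 * m * n)) = k) ∧
     (∃ k : ℤ, t * (3 * ((m : ℝ) ^ 2 + n ^ 2)) = k)) ↔ t = 1 / 3 ∨ t = 2 / 3 := by
  constructor
  · rintro ⟨⟨k, hk⟩, -, ⟨l, hl⟩⟩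
    have hc : IsCoprime ((m : ℤ) ^ 2) ((n : ℤ) ^ 2) :=
      (Nat.isCoprime_iff_coprime.mpr hcop).pow
    obtain ⟨x, y, hxy⟩ := hc
    obtain ⟨r, hr⟩ : ∃ r : ℕ, m + n = 2 * r + 1 := ⟨(m + n) / 2, by omega⟩
    have hm' : (m : ℤ) = 2 * r + 1 - n := by omega
    obtain ⟨q, hq⟩ : ∃ q : ℤ, (m : ℤ) ^ 2 - n ^ 2 = 2 * q + 1 :=
      ⟨2 * r ^ 2 + 2 * r - n * (2 * r + 1), by rw [hm']; ring⟩
    have hxy' : (x : ℝ) * (m : ℝ) ^ 2 + y * (n : ℝ) ^ 2 = 1 := by exact_mod_cast hxy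
    have hq' : (m : ℝ) ^ 2 - (n : ℝ) ^ 2 = 2 * q + 1 := by exact_mod_cast hq
    obtain ⟨z, hz⟩ : ∃ z : ℤ, 3 * t = z := by
      refine ⟨k - q * (x * (k + l) + y * (l - k)), ?_⟩
      push_cast
      rw [← hk, ← hl]
      linear_combination (-3 * t) * hq' + 6 * t * q * hxy'
    have h0 : 0 < z := by
      have : (0 : ℝ) < z := by linarith
      exact_mod_cast this
    have h3 : z < 3 := by
      have : (z : ℝ) < 3 := by linarith
      exact_mod_cast this
    have : z = 1 ∨ z = 2 := by omega
    rcases this with rfl | rfl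
    · left
      push_cast at hz
      linarith
    · right
      push_cast at hz
      linarith
  · rintro (rfl | rfl)
    · exact ⟨⟨(m : ℤ) ^ 2 - n ^ 2, by push_cast; ring⟩, ⟨2 * m * n, by push_cast; ring⟩,
        ⟨(m : ℤ) ^ 2 + n ^ 2, by push_cast; ring⟩⟩
    · exact ⟨⟨2 * ((m : ℤ) ^ 2 - n ^ 2), by push_cast; ring⟩,
        ⟨2 * (2 * m * n), by push_cast; ring⟩,
        ⟨2 * ((m : ℤ) ^ 2 + n ^ 2), by push_cast; ring⟩⟩
end

section
/- Let d, m, n be positive integers with m > n, gcd(m,n) = 1, and m + n odd. Then the rational numbers d*(m^2-n^2)/2 and d*(m^2+n^2)/2 are both integers if and only if d is even; and in every case (d*m*n)^2 + (d*(m^2-n^2)/2)^2 = (d*(m^2+n^2)/2)^2. Consequently, when P is the midpoint M of the hypotenuse, the six right triangles BDM, MEA, CDM, EMD, DCE, MEC (each with horizontal side d*m*n, vertical side d*(m^2-n^2)/2, and hypotenuse d*(m^2+n^2)/2) are Pythagorean if d is even, and non-Pythagorean if d is odd. -/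
theorem theorem3_midpoint (d m n : ℕ) (hd : 0 < d) (hm : 0 < m) (hn : 0 < n)
    (hmn : n < m) (hcop : Nat.gcd m n = 1) (hpar : (m + n) % 2 = 1) :
    (((∃ k : ℤ, (d : ℚ) * ((m : ℚ) ^ 2 - n ^ 2) / 2 = k) ∧
      (∃ k : ℤ, (d : ℚ) * ((m : ℚ) ^ 2 + n ^ 2) / 2 = k)) ↔ Even d) ∧
    ((d : ℚ) * m * n) ^ 2 + ((d : ℚ) * ((m : ℚ) ^ 2 - n ^ 2) / 2) ^ 2 =
      ((d : ℚ) * ((m : ℚ) ^ 2 + n ^ 2) / 2) ^ 2 := by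
  refine ⟨⟨?_, ?_⟩, by ring⟩
  · rintro ⟨-, k, hk⟩
    have h1 : (d : ℚ) * ((m : ℚ) ^ 2 + n ^ 2) = 2 * k := by linarith
    have h2 : (d : ℤ) * ((m : ℤ) ^ 2 + n ^ 2) = 2 * k := by exact_mod_cast h1
    have h3 : Even ((d : ℤ) * ((m : ℤ) ^ 2 + n ^ 2)) := by
      rw [h2]; exact even_two_mul k
    have h4 : Even (d * (m ^ 2 + n ^ 2)) := by exact_mod_cast h3
    have h5 : ¬ Even (m + n) := by
      rw [Nat.even_iff]; omega
    rcases Nat.even_mul.mp h4 with h | h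
    · exact h
    · exact absurd (by simpa [Nat.even_add, Nat.even_pow] using h) h5
  · rintro ⟨e, rfl⟩
    exact ⟨⟨e * ((m : ℤ) ^ 2 - n ^ 2), by push_cast; ring⟩,
      ⟨e * ((m : ℤ) ^ 2 + n ^ 2), by push_cast; ring⟩⟩
end

section
/- Let d, m, n be positive integers with m > n, gcd(m,n) = 1, and m + n odd. Then there exists an integer δ with 1 ≤ δ ≤ d - 1 and δ*(2*m*n) = (d - δ)*(m^2 - n^2) if and only if (m^2 - n^2 + 2*m*n) divides d. Moreover, if d = K*(m^2 - n^2 + 2*m*n) for a positive integer K, then the unique such δ is δ = K*(m^2 - n^2), and the corresponding sidelengths are: for triangle BDI, |DI| = x = K*(2*m*n)*(m^2-n^2), |BD| = K*(m^2-n^2)^2, |BI| = K*(m^4 - n^4); and for triangle IEA, |IE| = y = K*(2*m*n)*(m^2-n^2), |EA| = K*(2*m*n)^2, |IA| = K*(2*m*n)*(m^2+n^2). -/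
theorem aux_coprime (m n : ℕ) (hmn : n < m) (hcop : Nat.gcd m n = 1)
    (hpar : (m + n) % 2 = 1) : Nat.Coprime (m ^ 2 - n ^ 2) (2 * m * n) := by
  have hc : Nat.Coprime m n := hcop
  obtain ⟨k, rfl⟩ : ∃ k, m = n + k := ⟨m - n, by omega⟩
  have hA : (n + k) ^ 2 - n ^ 2 = (n + k + n) * k := by
    rw [Nat.sq_sub_sq]; congr 1; omega
  have h2 : Nat.Coprime (n + k + n) 2 := by
    rw [Nat.coprime_two_right, Nat.odd_iff]; exact hpar
  have h2k : Nat.Coprime k 2 := by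
    rw [Nat.coprime_two_right, Nat.odd_iff]; omega
  have hkn : Nat.Coprime k n := by simpa using hc
  have h3 : Nat.Coprime (n + k + n) (n + k) := by simpa using hc.symm
  have h4 : Nat.Coprime (n + k + n) n := by simpa using hkn
  have h5 : Nat.Coprime k (n + k) := by simpa using hkn
  rw [hA]
  exact Nat.Coprime.mul_left ((h2.mul_right h3).mul_right h4) ((h2k.mul_right h5).mul_right hkn)

theorem theorem4_angle_bisector (d m n : ℕ) (hd : 0 < d) (hm : 0 < m) (hn : 0 < n)
    (hmn : n < m) (hcop : Nat.gcd m n = 1) (hpar : (m + n) % 2 = 1) :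
    ((∃ δ : ℕ, 1 ≤ δ ∧ δ ≤ d - 1 ∧ δ * (2 * m * n) = (d - δ) * (m ^ 2 - n ^ 2)) ↔
      (m ^ 2 - n ^ 2 + 2 * m * n) ∣ d) ∧
    (∀ K : ℕ, 0 < K → d = K * (m ^ 2 - n ^ 2 + 2 * m * n) →
      (∀ δ : ℕ, (1 ≤ δ ∧ δ ≤ d - 1 ∧ δ * (2 * m * n) = (d - δ) * (m ^ 2 - n ^ 2)) ↔
        δ = K * (m ^ 2 - n ^ 2)) ∧
      (K * (m ^ 2 - n ^ 2)) * (2 * m * n) = K * (2 * m * n) * (m ^ 2 - n ^ 2) ∧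
      d * (m ^ 2 - n ^ 2) - (d - K * (m ^ 2 - n ^ 2)) * (m ^ 2 - n ^ 2)
        = K * (m ^ 2 - n ^ 2) ^ 2 ∧
      (K * (m ^ 2 - n ^ 2)) * (m ^ 2 + n ^ 2) = K * (m ^ 4 - n ^ 4) ∧
      (d - K * (m ^ 2 - n ^ 2)) * (m ^ 2 - n ^ 2) = K * (2 * m * n) * (m ^ 2 - n ^ 2) ∧
      d * (2 * m * n) - (K * (m ^ 2 - n ^ 2)) * (2 * m * n) = K * (2 * m * n) ^ 2 ∧
      (d - K * (m ^ 2 - n ^ 2)) * (m ^ 2 + n ^ 2) = K * (2 * m * n) * (m ^ 2 + n ^ 2)) := by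
  have hco := aux_coprime m n hmn hcop hpar
  have hApos : 0 < m ^ 2 - n ^ 2 := Nat.sub_pos_of_lt (Nat.pow_lt_pow_left hmn (by norm_num))
  have hBpos : 0 < 2 * m * n := by positivity
  have h4 : m ^ 4 - n ^ 4 = (m ^ 2 - n ^ 2) * (m ^ 2 + n ^ 2) := by
    have := Nat.sq_sub_sq (m ^ 2) (n ^ 2)
    rw [← pow_mul, ← pow_mul] at this
    rw [this, mul_comm]
  rw [h4]
  generalize m ^ 2 - n ^ 2 = A at *
  generalize 2 * m * n = B at *
  generalize m ^ 2 + n ^ 2 = C at *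
  have sub : ∀ K : ℕ, K * (A + B) - K * A = K * B := fun K => by
    rw [mul_add, Nat.add_sub_cancel_left]
  have key : ∀ K : ℕ, 0 < K → d = K * (A + B) →
      1 ≤ K * A ∧ K * A ≤ d - 1 ∧ (K * A) * B = (d - K * A) * A := by
    rintro K hK rfl
    have h1 : 0 < K * A := by positivity
    have h2 : 0 < K * B := by positivity
    refine ⟨h1, ?_, ?_⟩
    · rw [mul_add]; omega
    · rw [sub]; ring
  refine ⟨⟨?_, ?_⟩, ?_⟩
  · rintro ⟨δ, h1, h2, h3⟩
    obtain ⟨e, rfl⟩ : ∃ e, d = δ + e := ⟨d - δ, by omega⟩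
    rw [Nat.add_sub_cancel_left] at h3
    obtain ⟨K, rfl⟩ : A ∣ δ := hco.dvd_of_dvd_mul_right (h3 ▸ Dvd.intro_left e rfl)
    have he : e = K * B := Nat.eq_of_mul_eq_mul_right hApos (by rw [← h3]; ring)
    exact ⟨K, by rw [he]; ring⟩
  · rintro ⟨K, hK⟩
    exact ⟨K * A, key K (Nat.pos_of_ne_zero (by rintro rfl; simp at hK; omega))
      (by rw [hK, mul_comm])⟩
  · intro K hK hdK
    refine ⟨fun δ => ⟨?_, ?_⟩, by ring, ?_, by ring, ?_, ?_, ?_⟩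
    · rintro ⟨h1, h2, h3⟩
      obtain ⟨e, he⟩ : ∃ e, d = δ + e := ⟨d - δ, by omega⟩
      rw [he, Nat.add_sub_cancel_left] at h3
      rw [he] at hdK
      refine Nat.eq_of_mul_eq_mul_right (show 0 < A + B by omega) ?_
      calc δ * (A + B) = δ * A + δ * B := by ring
        _ = (δ + e) * A := by rw [h3]; ring
        _ = K * A * (A + B) := by rw [hdK]; ring
    · rintro rfl
      exact key K hK hdK
    · rw [hdK, sub, ← Nat.sub_mul]
      rw [mul_add, Nat.add_sub_cancel]; ring
    · rw [hdK, sub]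
    · rw [hdK, ← Nat.sub_mul, sub]; ring
    · rw [hdK, sub]
end

section
/- Let d, m, n be positive integers with m > n, gcd(m,n) = 1, and m + n odd. Consider the seven rational numbers d*(m^2-n^2)^3/(m^2+n^2)^2, d*(m^2-n^2)^2*(2*m*n)/(m^2+n^2)^2, d*(m^2-n^2)*(2*m*n)^2/(m^2+n^2)^2, d*(2*m*n)^3/(m^2+n^2)^2, d*(m^2-n^2)^2/(m^2+n^2), d*(2*m*n)^2/(m^2+n^2), and d*(2*m*n)*(m^2-n^2)/(m^2+n^2). These seven numbers are all integers if and only if (m^2+n^2)^2 divides d. -/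
theorem theorem5_divisibility (d m n : ℕ) (hd : 0 < d) (hm : 0 < m) (hn : 0 < n)
    (hmn : n < m) (hcop : Nat.gcd m n = 1) (hpar : (m + n) % 2 = 1) :
    ((∃ k : ℤ, (d : ℚ) * ((m : ℚ) ^ 2 - n ^ 2) ^ 3 / ((m : ℚ) ^ 2 + n ^ 2) ^ 2 = k) ∧
     (∃ k : ℤ, (d : ℚ) * ((m : ℚ) ^ 2 - n ^ 2) ^ 2 * (2 * m * n) / ((m : ℚ) ^ 2 + n ^ 2) ^ 2 = k) ∧
     (∃ k : ℤ, (d : ℚ) * ((m : ℚ) ^ 2 - n ^ 2) * (2 * m * n) ^ 2 / ((m : ℚ) ^ 2 + n ^ 2) ^ 2 = k) ∧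
     (∃ k : ℤ, (d : ℚ) * (2 * m * n) ^ 3 / ((m : ℚ) ^ 2 + n ^ 2) ^ 2 = k) ∧
     (∃ k : ℤ, (d : ℚ) * ((m : ℚ) ^ 2 - n ^ 2) ^ 2 / ((m : ℚ) ^ 2 + n ^ 2) = k) ∧
     (∃ k : ℤ, (d : ℚ) * (2 * m * n) ^ 2 / ((m : ℚ) ^ 2 + n ^ 2) = k) ∧
     (∃ k : ℤ, (d : ℚ) * (2 * m * n) * ((m : ℚ) ^ 2 - n ^ 2) / ((m : ℚ) ^ 2 + n ^ 2) = k)) ↔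
    (m ^ 2 + n ^ 2) ^ 2 ∣ d := by 
  have hc : ((m : ℚ) ^ 2 + n ^ 2) ≠ 0 := by positivity
  constructor
  · rintro ⟨-, -, -, ⟨k, hk⟩, -, -, -⟩
    rw [div_eq_iff (pow_ne_zero 2 hc)] at hk
    have hz : (d : ℤ) * (2 * m * n) ^ 3 = k * ((m : ℤ) ^ 2 + n ^ 2) ^ 2 := by exact_mod_cast hk
    have hdvd : (m ^ 2 + n ^ 2) ^ 2 ∣ d * (2 * m * n) ^ 3 := by
      have : (((m ^ 2 + n ^ 2) ^ 2 : ℕ) : ℤ) ∣ ((d * (2 * m * n) ^ 3 : ℕ) : ℤ) := by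
        push_cast
        exact ⟨k, by rw [hz]; ring⟩
      exact_mod_cast this
    have h0 : Nat.Coprime m n := hcop
    have h1 : Nat.Coprime (m ^ 2 + n ^ 2) m := by
      have : Nat.Coprime (n ^ 2 + m * m) m := by
        rw [Nat.coprime_add_mul_left_left]
        exact h0.symm.pow_left 2
      rwa [show m ^ 2 + n ^ 2 = n ^ 2 + m * m by ring]
    have h2 : Nat.Coprime (m ^ 2 + n ^ 2) n := by
      have : Nat.Coprime (m ^ 2 + n * n) n := by
        rw [Nat.coprime_add_mul_left_left]
        exact h0.pow_left 2
      rwa [show m ^ 2 + n ^ 2 = m ^ 2 + n * n by ring]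
    have h3 : Nat.Coprime (m ^ 2 + n ^ 2) 2 := by
      rw [Nat.coprime_two_right]
      have : Odd (m + n) := Nat.odd_iff.mpr hpar
      simp only [Nat.odd_add, Nat.odd_pow_iff two_ne_zero, Nat.even_pow' two_ne_zero] at this ⊢
      exact this
    have h4 := (h3.mul_right h1).mul_right h2
    exact (h4.pow 2 3).dvd_of_dvd_mul_right hdvd
  · rintro ⟨e, rfl⟩
    refine ⟨⟨e * ((m : ℤ) ^ 2 - n ^ 2) ^ 3, ?_⟩,
      ⟨e * ((m : ℤ) ^ 2 - n ^ 2) ^ 2 * (2 * m * n), ?_⟩,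
      ⟨e * ((m : ℤ) ^ 2 - n ^ 2) * (2 * m * n) ^ 2, ?_⟩,
      ⟨e * (2 * m * n) ^ 3, ?_⟩,
      ⟨e * ((m : ℤ) ^ 2 + n ^ 2) * ((m : ℤ) ^ 2 - n ^ 2) ^ 2, ?_⟩,
      ⟨e * ((m : ℤ) ^ 2 + n ^ 2) * (2 * m * n) ^ 2, ?_⟩,
      ⟨e * ((m : ℤ) ^ 2 + n ^ 2) * (2 * m * n) * ((m : ℤ) ^ 2 - n ^ 2), ?_⟩⟩
    all_goals
      push_cast
      first
      | rw [div_eq_iff (pow_ne_zero 2 hc)]; ring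
      | rw [div_eq_iff hc]; ring
end

section
/- Let d, m, n be positive integers with d ≥ 2, m > n, gcd(m,n) = 1, and m + n odd, and set a = d*(m^2-n^2), b = d*(2*m*n), c = d*(m^2+n^2). Then the set of real numbers t with 0 < t < 1 such that t*a, t*b, and t*c are all integers is exactly { i/d : i an integer, 1 ≤ i ≤ d-1 }. Consequently, there are exactly d - 1 positions of the point P on the hypotenuse BA for which both triangles BDP and PEA are Pythagorean, namely the points P_i with |BP_i| = i*(m^2+n^2) for i = 1, ..., d-1; and for each such i the triangle BD_iP_i has sidelengths i*(m^2-n^2), i*(2*m*n), i*(m^2+n^2) while the triangle P_iE_iA has sidelengths (d-i)*(m^2-n^2), (d-i)*(2*m*n), (d-i)*(m^2+n^2). -/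
theorem legs_isCoprime (m n : ℕ) (hcop : Nat.gcd m n = 1) (hpar : (m + n) % 2 = 1) :
    IsCoprime ((m : ℤ) ^ 2 - n ^ 2) (2 * m * n) := by
  have h : IsCoprime (m : ℤ) (n : ℤ) := Nat.isCoprime_iff_coprime.mpr hcop
  obtain ⟨q, hq⟩ : ∃ q : ℤ, (m : ℤ) = 2 * q + 1 - n := ⟨((m : ℤ) + n) / 2, by omega⟩
  have h2 : IsCoprime ((m : ℤ) ^ 2 - n ^ 2) 2 :=
    ⟨1, -(2 * q ^ 2 + 2 * q - 2 * q * n - n), by rw [hq]; ring⟩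
  have h3 : IsCoprime ((m : ℤ) ^ 2 - n ^ 2) m := by
    obtain ⟨u, v, huv⟩ := (h.symm.pow_left (m := 2))
    exact ⟨-u, v + u * m, by linear_combination huv⟩
  have h4 : IsCoprime ((m : ℤ) ^ 2 - n ^ 2) n := by
    obtain ⟨u, v, huv⟩ := (h.pow_left (m := 2))
    exact ⟨u, v + u * n, by linear_combination huv⟩
  exact (h2.mul_right h3).mul_right h4

theorem theorem6_exactly_d_minus_one (d m n : ℕ) (hd : 2 ≤ d) (hm : 0 < m) (hn : 0 < n)
    (hmn : n < m) (hcop : Nat.gcd m n = 1) (hpar : (m + n) % 2 = 1)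
    (a b c : ℕ) (ha : a = d * (m ^ 2 - n ^ 2)) (hb : b = d * (2 * m * n))
    (hc : c = d * (m ^ 2 + n ^ 2)) :
    ({t : ℝ | 0 < t ∧ t < 1 ∧ (∃ k : ℤ, t * a = k) ∧ (∃ k : ℤ, t * b = k) ∧
        (∃ k : ℤ, t * c = k)} =
      {t : ℝ | ∃ i : ℕ, 1 ≤ i ∧ i ≤ d - 1 ∧ t = (i : ℝ) / d}) ∧
    (∀ i : ℕ, 1 ≤ i → i ≤ d - 1 →
      ((i : ℝ) / d) * a = i * ((m : ℝ) ^ 2 - n ^ 2) ∧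
      ((i : ℝ) / d) * b = i * (2 * m * n) ∧
      ((i : ℝ) / d) * c = i * ((m : ℝ) ^ 2 + n ^ 2) ∧
      (1 - (i : ℝ) / d) * a = ((d - i : ℕ) : ℝ) * ((m : ℝ) ^ 2 - n ^ 2) ∧
      (1 - (i : ℝ) / d) * b = ((d - i : ℕ) : ℝ) * (2 * m * n) ∧
      (1 - (i : ℝ) / d) * c = ((d - i : ℕ) : ℝ) * ((m : ℝ) ^ 2 + n ^ 2)) := by 
  have hle : n ^ 2 ≤ m ^ 2 := Nat.pow_le_pow_left hmn.le 2
  have hd0 : (d : ℝ) ≠ 0 := by positivity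
  have hdpos : (0 : ℝ) < d := by positivity
  have ha' : (a : ℝ) = d * ((m : ℝ) ^ 2 - n ^ 2) := by
    rw [ha]; push_cast [Nat.cast_sub hle]; ring
  have hb' : (b : ℝ) = d * (2 * m * n) := by rw [hb]; push_cast; ring
  have hc' : (c : ℝ) = d * ((m : ℝ) ^ 2 + n ^ 2) := by rw [hc]; push_cast; ring
  rw [ha', hb', hc']
  refine ⟨?_, ?_⟩
  · ext t
    simp only [Set.mem_setOf_eq]
    constructor
    · rintro ⟨h0, h1, ⟨k, hk⟩, ⟨l, hl⟩, -⟩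
      obtain ⟨u, v, huv⟩ := legs_isCoprime m n hcop hpar
      have huv' : (u : ℝ) * ((m : ℝ) ^ 2 - n ^ 2) + v * (2 * m * n) = 1 := by
        exact_mod_cast huv
      have hs : t * d = ((u * k + v * l : ℤ) : ℝ) := by
        push_cast
        linear_combination (-(t * d)) * huv' + u * hk + v * hl
      generalize u * k + v * l = s at hs
      have hs0 : 0 < s := by
        have : (0 : ℝ) < s := by rw [← hs]; positivity
        exact_mod_cast this
      have hs1 : s < d := by
        have : (s : ℝ) < d := by rw [← hs]; nlinarith
        exact_mod_cast this
      lift s to ℕ using hs0.le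
      refine ⟨s, by omega, by omega, ?_⟩
      rw [eq_div_iff hd0, hs]; simp
    · rintro ⟨i, h1, h2, rfl⟩
      have hi : (0 : ℝ) < i := by exact_mod_cast h1
      have hid : (i : ℝ) < d := by exact_mod_cast (by omega : i < d)
      refine ⟨by positivity, (div_lt_one hdpos).2 hid, ⟨i * ((m : ℤ) ^ 2 - n ^ 2), ?_⟩,
        ⟨i * (2 * m * n), ?_⟩, ⟨i * ((m : ℤ) ^ 2 + n ^ 2), ?_⟩⟩ <;>
      · push_cast
        field_simp
  · intro i h1 h2
    rw [Nat.cast_sub (by omega : i ≤ d)]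
    refine ⟨?_, ?_, ?_, ?_, ?_, ?_⟩ <;> field_simp
end

section
/- Let m, n, M, N be positive integers with m > n, gcd(m,n) = 1, m + n odd, M > N, gcd(M,N) = 1, M + N odd, and let K be a positive integer. Set δ = K*m*n*(M^2 - N^2) and d = K*(m*n*(M^2 - N^2) + M*N*(m^2 - n^2)). Then 1 ≤ δ ≤ d - 1 and d ≥ 2; and with y = δ*(m^2 - n^2) and x = (d - δ)*(2*m*n), one has x = K*m*n*(m^2-n^2)*(2*M*N), y = K*m*n*(m^2-n^2)*(M^2-N^2), and x^2 + y^2 = (K*m*n*(m^2-n^2)*(M^2+N^2))^2. In particular x^2 + y^2 is a perfect square. -/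
theorem family1 (m n M N K : ℕ) (hm : 0 < m) (hn : 0 < n) (hmn : n < m)
    (hcop : Nat.gcd m n = 1) (hpar : (m + n) % 2 = 1)
    (hM : 0 < M) (hN : 0 < N) (hMN : N < M) (hcop' : Nat.gcd M N = 1)
    (hpar' : (M + N) % 2 = 1) (hK : 0 < K)
    (δ d : ℕ) (hδ : δ = K * m * n * (M ^ 2 - N ^ 2))
    (hd : d = K * (m * n * (M ^ 2 - N ^ 2) + M * N * (m ^ 2 - n ^ 2)))
    (x y : ℕ) (hy : y = δ * (m ^ 2 - n ^ 2)) (hx : x = (d - δ) * (2 * m * n)) :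
    1 ≤ δ ∧ δ ≤ d - 1 ∧ 2 ≤ d ∧
    x = K * m * n * (m ^ 2 - n ^ 2) * (2 * M * N) ∧
    y = K * m * n * (m ^ 2 - n ^ 2) * (M ^ 2 - N ^ 2) ∧
    x ^ 2 + y ^ 2 = (K * m * n * (m ^ 2 - n ^ 2) * (M ^ 2 + N ^ 2)) ^ 2 := by 
  have hA : n ^ 2 < m ^ 2 := Nat.pow_lt_pow_left hmn (by norm_num)
  have hB : N ^ 2 < M ^ 2 := Nat.pow_lt_pow_left hMN (by norm_num)
  obtain ⟨u, hu⟩ : ∃ u, u = m ^ 2 - n ^ 2 := ⟨_, rfl⟩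
  obtain ⟨v, hv⟩ : ∃ v, v = M ^ 2 - N ^ 2 := ⟨_, rfl⟩
  have hu0 : 0 < u := by omega
  have hv0 : 0 < v := by omega
  have hv2 : M ^ 2 = v + N ^ 2 := by omega
  rw [← hu] at hd hy ⊢
  rw [← hv] at hd hδ ⊢
  have hδ0 : 0 < δ := by rw [hδ]; positivity
  have he0 : 0 < K * (M * N * u) := by positivity
  have hde : d = δ + K * (M * N * u) := by rw [hd, hδ]; ring
  have hsub : d - δ = K * (M * N * u) := by omega
  have hx' : x = K * m * n * u * (2 * M * N) := by rw [hx, hsub]; ring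
  have hy' : y = K * m * n * u * v := by rw [hy, hδ]; ring
  refine ⟨hδ0, by omega, by omega, hx', hy', ?_⟩
  rw [hx', hy']
  have key : (2 * M * N) ^ 2 + v ^ 2 = (M ^ 2 + N ^ 2) ^ 2 := by
    have : (2 * M * N) ^ 2 = 4 * M ^ 2 * N ^ 2 := by ring
    rw [this, hv2]; ring
  rw [mul_pow, mul_pow _ v, mul_pow _ (M ^ 2 + N ^ 2), ← key]
  ring
end
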